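/- For n ≥ 1, the subgroup of the unit group of Cl_n generated by {e_1, …, e_n} is isomorphic as a group to the subgroup of the unit group of Cl_{n+1} generated by {e_i e_{i+1} : 1 ≤ i ≤ n}; an isomorphism is induced by sending the generator e_i of the first group to the element e_i e_{n+1} of the second group. -/

import Mathlib

/-!
`Cl_m` is the Clifford algebra of `Q_m(x) = -(x,x)` on `ℝ^m`, with generators
`e_1, …, e_m`.  `M'_n` is the subgroup of the unit group of `Cl_n` generated by
`{e_1, …, e_n}`, and `M_n` is the subgroup of the unit group of `Cl_{n+1}`
generated by `{e_i e_{i+1} : 1 ≤ i ≤ n}`.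

Theorem: for `n ≥ 1`, `M'_n ≅ M_n` as groups, with an isomorphism induced by
sending the generator `e_i` of `M'_n` to the element `e_i e_{n+1}` of `M_n`.
-/

noncomputable section

/-- The quadratic form `Q_m(x) = -(x, x)` on `ℝ^m`. -/
def Qneg (m : ℕ) : QuadraticForm ℝ (Fin m → ℝ) :=
  QuadraticMap.weightedSumSquares ℝ (fun _ : Fin m => (-1 : ℝ))

/-- The real Clifford algebra `Cl_m` of `Q_m`. -/
abbrev Cl (m : ℕ) := CliffordAlgebra (Qneg m)

/-- The generator `e_i ∈ Cl_m`, the image of the `i`-th standard basis vector. -/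
def eCl (m : ℕ) (i : Fin m) : Cl m := CliffordAlgebra.ι (Qneg m) (Pi.single i 1)

/-- `M_n`: the subgroup of the unit group of `Cl_{n+1}` generated by the elements
`e_i e_{i+1}`, `1 ≤ i ≤ n`. -/
def Mgrp (n : ℕ) : Subgroup (Cl (n + 1))ˣ :=
  Subgroup.closure {u : (Cl (n + 1))ˣ | ∃ i : Fin n,
    (u : Cl (n + 1)) = eCl (n + 1) i.castSucc * eCl (n + 1) i.succ}

/-- `M'_n`: the subgroup of the unit group of `Cl_n` generated by `e_1, …, e_n`. -/
def Mgrp' (n : ℕ) : Subgroup (Cl n)ˣ :=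
  Subgroup.closure {u : (Cl n)ˣ | ∃ i : Fin n, (u : Cl n) = eCl n i}

open CliffordAlgebra in
/-- `Q_{n+1}` is the orthogonal sum of `Q_n` and the form `r ↦ -r²`. -/
def isometryQneg (n : ℕ) : (EquivEven.Q' (Qneg n)).IsometryEquiv (Qneg (n + 1)) where
  toFun x := Fin.snoc x.1 x.2
  invFun y := (fun i => y i.castSucc, y (Fin.last n))
  map_add' x y := by
    ext i
    refine Fin.lastCases ?_ (fun j => ?_) i <;> simp
  map_smul' r x := by
    ext i
    refine Fin.lastCases ?_ (fun j => ?_) i <;> simp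
  left_inv x := by simp
  right_inv y := by
    ext i
    refine Fin.lastCases ?_ (fun j => ?_) i <;> simp
  map_app' x := by
    simp [Qneg, QuadraticMap.weightedSumSquares_apply, Fin.sum_univ_castSucc, add_comm]

theorem isometryQneg_single_zero (n : ℕ) (i : Fin n) :
    isometryQneg n (Pi.single i 1, 0) = Pi.single i.castSucc 1 := by
  change (Fin.snoc (Pi.single i 1 : Fin n → ℝ) (0 : ℝ) : Fin (n + 1) → ℝ) = _
  ext k
  refine Fin.lastCases ?_ (fun j => ?_) k
  · simp [Fin.ext_iff, i.isLt.ne']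
  · simp [Pi.single_apply]

theorem isometryQneg_zero_one (n : ℕ) :
    isometryQneg n (0, 1) = Pi.single (Fin.last n) 1 := by
  change (Fin.snoc (0 : Fin n → ℝ) (1 : ℝ) : Fin (n + 1) → ℝ) = _
  ext k
  refine Fin.lastCases ?_ (fun j => ?_) k
  · simp
  · simp [Fin.ext_iff, j.isLt.ne]

theorem eCl_mul_self (m : ℕ) (i : Fin m) : eCl m i * eCl m i = -1 := by
  rw [eCl, CliffordAlgebra.ι_sq_scalar]
  have h : Qneg m (Pi.single i 1) = -1 := by
    simp [Qneg, QuadraticMap.weightedSumSquares_apply, Pi.single_apply]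
  rw [h, map_neg, map_one]

theorem eCl_mul_eCl_of_ne (m : ℕ) {i j : Fin m} (h : i ≠ j) :
    eCl m i * eCl m j = -(eCl m j * eCl m i) := by
  refine CliffordAlgebra.ι_mul_ι_comm_of_isOrtho ?_
  rw [QuadraticMap.isOrtho_def]
  simp only [Qneg, QuadraticMap.weightedSumSquares_apply, ← Finset.sum_add_distrib]
  refine Finset.sum_congr rfl fun k _ => ?_
  by_cases hi : k = i
  · subst hi
    simp [h]
  · simp [hi]

/-- The generator `e_i` as a unit of `Cl_m`. -/
def eClUnit (m : ℕ) (i : Fin m) : (Cl m)ˣ where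
  val := eCl m i
  inv := -eCl m i
  val_inv := by simp [eCl_mul_self]
  inv_val := by simp [eCl_mul_self]

theorem eClUnit_mul_mul_mul (m : ℕ) {j l : Fin m} (h : j ≠ l) (i : Fin m) :
    eClUnit m i * eClUnit m l * (eClUnit m j * eClUnit m l) = eClUnit m i * eClUnit m j := by
  ext
  change eCl m i * eCl m l * (eCl m j * eCl m l) = eCl m i * eCl m j
  rw [eCl_mul_eCl_of_ne m h, mul_neg, mul_assoc, ← mul_assoc (eCl m l), eCl_mul_self]
  simp

theorem Mgrp'_eq_closure_range (n : ℕ) :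
    Mgrp' n = Subgroup.closure (Set.range (eClUnit n)) := by
  refine congrArg Subgroup.closure (Set.ext fun u => exists_congr fun i => ?_)
  rw [eq_comm (b := u), Units.ext_iff]
  rfl

theorem Mgrp_eq_closure_range (n : ℕ) :
    Mgrp n = Subgroup.closure
      (Set.range fun i : Fin n => eClUnit (n + 1) i.castSucc * eClUnit (n + 1) i.succ) := by
  refine congrArg Subgroup.closure (Set.ext fun u => exists_congr fun i => ?_)
  rw [eq_comm (b := u), Units.ext_iff]
  rfl

theorem eClUnit_mul_last_mem_Mgrp (n : ℕ) (i : Fin n) :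
    eClUnit (n + 1) i.castSucc * eClUnit (n + 1) (Fin.last n) ∈ Mgrp n := by
  suffices H : ∀ k : Fin (n + 1), k ≠ Fin.last n →
      eClUnit (n + 1) k * eClUnit (n + 1) (Fin.last n) ∈ Mgrp n from
    H _ (Fin.castSucc_lt_last i).ne
  intro k
  induction k using Fin.reverseInduction with
  | last => exact fun h => absurd rfl h
  | cast j ih =>
    intro _
    have hj : eClUnit (n + 1) j.castSucc * eClUnit (n + 1) j.succ ∈ Mgrp n := by
      rw [Mgrp_eq_closure_range]
      exact Subgroup.subset_closure ⟨j, rfl⟩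
    by_cases h : j.succ = Fin.last n
    · rwa [h] at hj
    · rwa [← eClUnit_mul_mul_mul _ h, Subgroup.mul_mem_cancel_right _ (ih h)] at hj

/-- `M_n` is also generated by the elements `e_i e_{n+1}`, `1 ≤ i ≤ n`. -/
theorem Mgrp_eq_closure_range_mul_last (n : ℕ) :
    Mgrp n = Subgroup.closure (Set.range fun i : Fin n =>
      eClUnit (n + 1) i.castSucc * eClUnit (n + 1) (Fin.last n)) := by
  apply le_antisymm
  · rw [Mgrp_eq_closure_range, Subgroup.closure_le]
    rintro _ ⟨i, rfl⟩
    rcases Fin.eq_castSucc_or_eq_last i.succ with ⟨j, hj⟩ | h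
    · dsimp only
      rw [hj, ← eClUnit_mul_mul_mul _ (Fin.castSucc_lt_last j).ne]
      exact mul_mem (Subgroup.subset_closure ⟨i, rfl⟩) (Subgroup.subset_closure ⟨j, rfl⟩)
    · dsimp only
      rw [h]
      exact Subgroup.subset_closure ⟨i, rfl⟩
  · rw [Subgroup.closure_le]
    rintro _ ⟨i, rfl⟩
    exact eClUnit_mul_last_mem_Mgrp n i

open CliffordAlgebra in
/-- The algebra embedding `Cl_n → Cl_{n+1}` sending `e_i` to `e_i e_{n+1}`. -/
def clEmbedding (n : ℕ) : Cl n →ₐ[ℝ] Cl (n + 1) :=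
  (equivOfIsometry (isometryQneg n)).toAlgHom.comp <|
    (even (EquivEven.Q' (Qneg n))).val.comp <| (toEven (Qneg n)).comp involute

theorem clEmbedding_injective (n : ℕ) : Function.Injective (clEmbedding n) :=
  (CliffordAlgebra.equivOfIsometry (isometryQneg n)).injective.comp <|
    Subtype.val_injective.comp <| (CliffordAlgebra.equivEven (Qneg n)).injective.comp
      CliffordAlgebra.involute_involutive.injective

open CliffordAlgebra in
theorem clEmbedding_eCl (n : ℕ) (i : Fin n) :
    clEmbedding n (eCl n i) = eCl (n + 1) i.castSucc * eCl (n + 1) (Fin.last n) := by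
  change equivOfIsometry (isometryQneg n)
    (toEven (Qneg n) (involute (eCl n i)) : CliffordAlgebra (EquivEven.Q' (Qneg n))) = _
  have key : (toEven (Qneg n) (involute (eCl n i)) : CliffordAlgebra (EquivEven.Q' (Qneg n))) =
      EquivEven.v (Qneg n) (Pi.single i 1) * EquivEven.e0 (Qneg n) := by
    rw [eCl, involute_ι, map_neg, ← EquivEven.neg_e0_mul_v, ← toEven_ι]
    rfl
  rw [key, map_mul]
  congr 1
  · exact (map_apply_ι _ _).trans (congrArg (ι _) (isometryQneg_single_zero n i))
  · exact (map_apply_ι _ _).trans (congrArg (ι _) (isometryQneg_zero_one n))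

theorem map_Mgrp' (n : ℕ) :
    (Mgrp' n).map (Units.map (clEmbedding n : Cl n →* Cl (n + 1))) = Mgrp n := by
  rw [Mgrp'_eq_closure_range, Mgrp_eq_closure_range_mul_last, MonoidHom.map_closure,
    ← Set.range_comp]
  congr 2
  ext i : 2
  exact clEmbedding_eCl n i

theorem Mgrp'_iso_Mgrp (n : ℕ) (hn : 1 ≤ n) :
    ∃ φ : ↥(Mgrp' n) ≃* ↥(Mgrp n),
      ∀ (i : Fin n) (u : ↥(Mgrp' n)), ((u : (Cl n)ˣ) : Cl n) = eCl n i →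
        ((φ u : (Cl (n + 1))ˣ) : Cl (n + 1)) =
          eCl (n + 1) i.castSucc * eCl (n + 1) (Fin.last n) := by
  have hinj : Function.Injective (Units.map (clEmbedding n : Cl n →* Cl (n + 1))) :=
    Units.map_injective (clEmbedding_injective n)
  refine ⟨((Mgrp' n).equivMapOfInjective _ hinj).trans
    (MulEquiv.subgroupCongr (map_Mgrp' n)), fun i u hu => ?_⟩
  change clEmbedding n ((u : (Cl n)ˣ) : Cl n) = _
  rw [hu, clEmbedding_eCl]
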